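/- There is no strictly convex equilateral pentagon of type 9: no strictly convex equilateral pentagon ABCDE in the Euclidean plane has interior angles α, β, γ, δ, ε satisfying both 2ε + β = 2π and 2δ + γ = 2π. -/

import Mathlib

/-!
Write `u = D - C`, `v = E - D`, `w = C - B`, `x = A - E` for the sides and `Q` for the squared side
length. The relation `2δ + γ = 2π` says that the diagonal `BD` is perpendicular to the side `DE`:
the triangle `BCD` is isosceles, so `∠CDB = (π - γ)/2 = δ - π/2` and hence `∠BDE = π/2`
(`diagonal_perp`). The relation `2ε + β = 2π` with `β < π` makes `ε` obtuse, so the projection of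
`A` onto the line `DE` lies strictly beyond `E`. Hence the distance from `A` to the line `BD`
exceeds `DE`, contradicting `AB = DE`.

Orientation enters only through the sign of a product of two determinants, so both orientations of
the pentagon are handled at once (`no_type9_of_det`).
-/

open EuclideanGeometry

/-- Signed area determinant of two plane vectors. -/
noncomputable def det2 (u v : EuclideanSpace ℝ (Fin 2)) : ℝ :=
  u 0 * v 1 - u 1 * v 0

/-- `R` lies strictly to the left of the directed line from `P` to `Q`. -/
def SLeft (P Q R : EuclideanSpace ℝ (Fin 2)) : Prop :=
  0 < det2 (Q - P) (R - P)

/-- The five points are in strictly convex position, listed in counterclockwise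
cyclic order along their convex hull (in particular no three are collinear):
for every directed edge of the pentagon, all remaining vertices lie strictly to its left. -/
def CcwConvex5 (A B C D E : EuclideanSpace ℝ (Fin 2)) : Prop :=
  SLeft A B C ∧ SLeft A B D ∧ SLeft A B E ∧
  SLeft B C D ∧ SLeft B C E ∧ SLeft B C A ∧
  SLeft C D E ∧ SLeft C D A ∧ SLeft C D B ∧
  SLeft D E A ∧ SLeft D E B ∧ SLeft D E C ∧
  SLeft E A B ∧ SLeft E A C ∧ SLeft E A D

/-- The five points are in strictly convex position, listed in cyclic order
(either orientation) along their convex hull, with no three collinear. -/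
def ConvexPos5 (A B C D E : EuclideanSpace ℝ (Fin 2)) : Prop :=
  CcwConvex5 A B C D E ∨ CcwConvex5 E D C B A

/-- The pentagon `ABCDE` is equilateral. -/
def Equilateral5 (A B C D E : EuclideanSpace ℝ (Fin 2)) : Prop :=
  dist A B = dist B C ∧ dist B C = dist C D ∧ dist C D = dist D E ∧ dist D E = dist E A


/-- The dot product of the two arms of an angle `∠ X Y Z` with arms of length `ℓ`. -/
lemma dot_of_angle (X Y Z : EuclideanSpace ℝ (Fin 2)) (ℓ : ℝ)
    (h1 : dist Y X = ℓ) (h2 : dist Y Z = ℓ) :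
    (X 0 - Y 0) * (Z 0 - Y 0) + (X 1 - Y 1) * (Z 1 - Y 1) = ℓ ^ 2 * Real.cos (∠ X Y Z) := by
  have h := InnerProductGeometry.cos_angle_mul_norm_mul_norm (X -ᵥ Y) (Z -ᵥ Y)
  rw [← dist_eq_norm_vsub, ← dist_eq_norm_vsub, dist_comm X, dist_comm Z, h1, h2] at h
  have h' : inner ℝ (X -ᵥ Y) (Z -ᵥ Y) =
      (X 0 - Y 0) * (Z 0 - Y 0) + (X 1 - Y 1) * (Z 1 - Y 1) := by
    simp [PiLp.inner_apply, Fin.sum_univ_two]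
    ring
  rw [← h', ← h, EuclideanGeometry.angle]
  ring

lemma sq_of_dist (X Y : EuclideanSpace ℝ (Fin 2)) (ℓ : ℝ) (h : dist X Y = ℓ) :
    (Y 0 - X 0) ^ 2 + (Y 1 - X 1) ^ 2 = ℓ ^ 2 := by
  rw [← h, EuclideanSpace.dist_eq, Real.sq_sqrt (by positivity)]
  simp [Fin.sum_univ_two, Real.dist_eq, sq_abs]
  ring

/-- If `2θ + φ = 2π` with `θ, φ ≤ π`, then `θ` is not acute and
`cos φ = 2 cos² θ - 1`. -/
lemma cos_of_relation (θ φ : ℝ) (hθ : θ ≤ Real.pi) (hφ : φ ≤ Real.pi)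
    (h : 2 * θ + φ = 2 * Real.pi) :
    Real.cos θ ≤ 0 ∧ Real.cos φ = 2 * Real.cos θ ^ 2 - 1 := by
  constructor
  · apply Real.cos_nonpos_of_pi_div_two_le_of_le <;> linarith [Real.pi_pos]
  · rw [show φ = 2 * Real.pi - 2 * θ by linarith, Real.cos_two_pi_sub, Real.cos_two_mul]

/-- Coordinate form of `BD ⊥ DE`: for consecutive sides `w, u, v` of squared length `Q` turning the
same way, where `c = cos δ ≤ 0` and `cos γ = cos 2δ`, the vector `w + u` is orthogonal to `v`. -/
lemma diagonal_perp (u0 u1 v0 v1 w0 w1 Q c : ℝ) (hQ : 0 < Q) (hc : c ≤ 0)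
    (hu : u0 ^ 2 + u1 ^ 2 = Q) (hv : v0 ^ 2 + v1 ^ 2 = Q) (hw : w0 ^ 2 + w1 ^ 2 = Q)
    (huv : u0 * v0 + u1 * v1 = -(Q * c)) (hwu : w0 * u0 + w1 * u1 = -(Q * (2 * c ^ 2 - 1)))
    (hdet : 0 < (w0 * u1 - w1 * u0) * (u0 * v1 - u1 * v0)) :
    (w0 + u0) * v0 + (w1 + u1) * v1 = 0 := by
  set P := w0 * u1 - w1 * u0 with hP
  set R := u0 * v1 - u1 * v0 with hR
  have hP2 : P ^ 2 = Q ^ 2 - (Q * (2 * c ^ 2 - 1)) ^ 2 := by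
    have : P ^ 2 = (w0 ^ 2 + w1 ^ 2) * (u0 ^ 2 + u1 ^ 2) - (w0 * u0 + w1 * u1) ^ 2 := by
      rw [hP]; ring
    rw [this, hu, hw, hwu]; ring
  have hR2 : R ^ 2 = Q ^ 2 - (Q * c) ^ 2 := by
    have : R ^ 2 = (u0 ^ 2 + u1 ^ 2) * (v0 ^ 2 + v1 ^ 2) - (u0 * v0 + u1 * v1) ^ 2 := by
      rw [hR]; ring
    rw [this, hu, hv, huv]; ring
  -- `sin γ = -2 sin δ cos δ`; the sign comes from the equal orientation of the two turns.
  have hPR : P = -2 * c * R := by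
    have hfac : (P + 2 * c * R) * (P - 2 * c * R) = 0 := by
      have : (P + 2 * c * R) * (P - 2 * c * R) = P ^ 2 - 4 * c ^ 2 * R ^ 2 := by ring
      rw [this, hP2, hR2]; ring
    rcases mul_eq_zero.mp hfac with h | h
    · linarith
    · have h' : P = 2 * c * R := by linarith
      rw [h'] at hdet
      nlinarith [sq_nonneg R, mul_nonneg (neg_nonneg.mpr hc) (sq_nonneg R)]
  have hkey : (u0 ^ 2 + u1 ^ 2) * (w0 * v0 + w1 * v1) =
      (w0 * u0 + w1 * u1) * (u0 * v0 + u1 * v1) - P * R := by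
    rw [hP, hR]; ring
  rw [hu, hwu, huv, hPR] at hkey
  have hz : Q * ((w0 + u0) * v0 + (w1 + u1) * v1) = 0 := by
    linear_combination hkey + Q * huv + 2 * c * hR2
  exact (mul_eq_zero.mp hz).resolve_left (ne_of_gt hQ)

/-- The contradiction for either orientation: only the agreement in sense of the turns at `C` and
`D`, and the non-collinearity of `A, B, C`, are used. -/
lemma no_type9_of_det (A B C D E : EuclideanSpace ℝ (Fin 2))
    (hdet : 0 < ((C 0 - B 0) * (D 1 - C 1) - (C 1 - B 1) * (D 0 - C 0)) *
      ((D 0 - C 0) * (E 1 - D 1) - (D 1 - C 1) * (E 0 - D 0)))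
    (hABC : (C 0 - B 0) * (A 1 - B 1) - (C 1 - B 1) * (A 0 - B 0) ≠ 0)
    (heq : Equilateral5 A B C D E)
    (h1 : 2 * ∠ D E A + ∠ A B C = 2 * Real.pi)
    (h2 : 2 * ∠ C D E + ∠ B C D = 2 * Real.pi) : False := by
  obtain ⟨e1, e2, e3, e4⟩ := heq
  obtain ⟨ℓ, hBC⟩ : ∃ ℓ, dist B C = ℓ := ⟨_, rfl⟩
  have hAB : dist A B = ℓ := e1.trans hBC
  have hCD : dist C D = ℓ := e2.symm.trans hBC
  have hDE : dist D E = ℓ := e3.symm.trans hCD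
  have hEA : dist E A = ℓ := e4.symm.trans hDE
  obtain ⟨c1, c1'⟩ := cos_of_relation _ _ (angle_le_pi D E A) (angle_le_pi A B C) h1
  obtain ⟨c2, c2'⟩ := cos_of_relation _ _ (angle_le_pi C D E) (angle_le_pi B C D) h2
  have dE := dot_of_angle D E A ℓ (by rw [dist_comm, hDE]) hEA
  have dB := dot_of_angle A B C ℓ (by rw [dist_comm, hAB]) hBC
  have dC := dot_of_angle B C D ℓ (by rw [dist_comm, hBC]) hCD
  have dD := dot_of_angle C D E ℓ (by rw [dist_comm, hCD]) hDE
  have qAB := sq_of_dist A B ℓ hAB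
  have qBC := sq_of_dist B C ℓ hBC
  have qCD := sq_of_dist C D ℓ hCD
  have qDE := sq_of_dist D E ℓ hDE
  rw [c1'] at dB
  rw [c2'] at dC
  generalize Real.cos (∠ D E A) = a at *
  generalize Real.cos (∠ C D E) = c at *
  have hQ : 0 < ℓ ^ 2 := by
    rcases (sq_nonneg ℓ).lt_or_eq with h | h
    · exact h
    · exfalso
      have hx : C 0 - B 0 = 0 := by
        refine pow_eq_zero_iff (two_ne_zero) |>.mp (le_antisymm ?_ (sq_nonneg _))
        linarith [sq_nonneg (C 0 - B 0), sq_nonneg (C 1 - B 1)]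
      have hy : C 1 - B 1 = 0 := by
        refine pow_eq_zero_iff (two_ne_zero) |>.mp (le_antisymm ?_ (sq_nonneg _))
        linarith [sq_nonneg (C 0 - B 0), sq_nonneg (C 1 - B 1)]
      exact hABC (by rw [hx, hy]; ring)
  have perp := diagonal_perp (D 0 - C 0) (D 1 - C 1) (E 0 - D 0) (E 1 - D 1)
    (C 0 - B 0) (C 1 - B 1) (ℓ ^ 2) c hQ c2 qCD qDE qBC
    (by linear_combination -dD) (by linear_combination -dC) hdet
  -- `∠ D E A = π / 2` would force `∠ A B C = π`.
  have ha : a ≠ 0 := by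
    rintro rfl
    apply hABC
    have : ((C 0 - B 0) * (A 1 - B 1) - (C 1 - B 1) * (A 0 - B 0)) ^ 2 = 0 := by
      have : ((C 0 - B 0) * (A 1 - B 1) - (C 1 - B 1) * (A 0 - B 0)) ^ 2 =
          ((C 0 - B 0) ^ 2 + (C 1 - B 1) ^ 2) * ((B 0 - A 0) ^ 2 + (B 1 - A 1) ^ 2) -
          ((A 0 - B 0) * (C 0 - B 0) + (A 1 - B 1) * (C 1 - B 1)) ^ 2 := by ring
      rw [this, qAB, qBC, dB]; ring
    exact pow_eq_zero_iff (two_ne_zero) |>.mp this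
  have ha' : a < 0 := lt_of_le_of_ne c1 ha
  -- The component of `A - B` along `DE` is `ℓ (1 - cos ε) > ℓ`.
  have proj : (A 0 - B 0) * (E 0 - D 0) + (A 1 - B 1) * (E 1 - D 1) = ℓ ^ 2 * (1 - a) := by
    linear_combination perp + qDE - dE
  have hsq : (A 0 - B 0 - (E 0 - D 0)) ^ 2 + (A 1 - B 1 - (E 1 - D 1)) ^ 2 = 2 * (ℓ ^ 2 * a) := by
    linear_combination qAB + qDE - 2 * proj
  have hpos := add_nonneg (sq_nonneg (A 0 - B 0 - (E 0 - D 0)))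
    (sq_nonneg (A 1 - B 1 - (E 1 - D 1)))
  rw [hsq] at hpos
  linarith [mul_neg_of_pos_of_neg hQ ha']

theorem type9_no_convex_equilateral :
    ¬ ∃ A B C D E : EuclideanSpace ℝ (Fin 2),
      ConvexPos5 A B C D E ∧ Equilateral5 A B C D E ∧
      2 * ∠ D E A + ∠ A B C = 2 * Real.pi ∧
      2 * ∠ C D E + ∠ B C D = 2 * Real.pi := by
  rintro ⟨A, B, C, D, E, hconv, heq, h1, h2⟩
  rcases hconv with h | h
  · obtain ⟨-, -, -, hBCD, -, hBCA, hCDE, -⟩ := h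
    simp only [SLeft, det2, PiLp.sub_apply] at hBCD hBCA hCDE
    refine no_type9_of_det A B C D E (mul_pos ?_ ?_) hBCA.ne' heq h1 h2 <;> linarith
  · obtain ⟨hEDC, -, -, hDCB, -, -, hCBA, -⟩ := h
    simp only [SLeft, det2, PiLp.sub_apply] at hEDC hDCB hCBA
    refine no_type9_of_det A B C D E (mul_pos_of_neg_of_neg ?_ ?_) (ne_of_lt ?_) heq h1 h2 <;>
      linarith
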